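/- Let Γ be a countable subgroup of SL₂(ℝ), let μ be a Haar measure on SL₂(ℝ), let τ ∈ SL₂(ℝ), let 0 < δ ≤ 1/8, and let T be a real number with T(1 − 4δ) ≥ 1. Let ψ : SL₂(ℝ) → [0, ∞) be measurable, supported in B_δ, with ∫ ψ dμ = 1. For S ≥ 0 define F_S(g) = Σ_{γ ∈ Γ} 𝟙[ τ^{−1}γg·i ∈ C_S ]. Then ∫ F_{T(1−4δ)}(g) ψ(g) dμ(g) ≤ #{γ ∈ Γ : τ^{−1}γ·i ∈ C_T} ≤ ∫ F_{T(1+4δ)}(g) ψ(g) dμ(g), as an inequality of extended real numbers. -/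

import Mathlib

/-!
Write `s(z) = Re z / Im z`, so that `z ∈ C_S` means `|s(z)| ≤ S`. The quantity `arsinh |s(z)|` is the
hyperbolic distance from `z` to the imaginary axis, hence it changes by at most `dist z w` when `z`
is replaced by `w`. This is used in the algebraic form
`(s(w) - c s(z))² ≤ (c² - 1)(1 + s(z)²)` with `c = cosh (dist z w)` (`slope_sub_sq_le`).
If `dist z w ≤ δ ≤ 1/8` and `S ≥ 1`, it follows that `z ∈ C_S` implies `w ∈ C_{S(1+4δ)}`
(`mem_cone_of_dist_le`).

An element `g = k a_y k' ∈ B_δ` moves `i` by `|log y| < δ`, because `2 cosh (dist i (g i))` is the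
sum of the squares of the entries of `g`, which is invariant under `K` on both sides. Since
`SL₂(ℝ)` acts by isometries, `h g i` and `h i` are at distance less than `δ` for every `h`. Taking
`h = τ⁻¹γ` and `S = T(1-4δ)` or `S = T` gives
`F_{T(1-4δ)}(g) ≤ #{γ : τ⁻¹γ i ∈ C_T} ≤ F_{T(1+4δ)}(g)` for all `g ∈ B_δ`, where the first inequality
uses `(1-4δ)(1+4δ) ≤ 1`. Integrating against the probability density `ψ` gives the theorem.
-/

open Real MeasureTheory ENNReal

noncomputable instance : MeasurableSpace (Matrix.SpecialLinearGroup (Fin 2) ℝ) :=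
  MeasurableSpace.comap (fun g => (g : Matrix (Fin 2) (Fin 2) ℝ))
    (inferInstance : MeasurableSpace (Fin 2 → Fin 2 → ℝ))

/-- The cone `C_T = {z ∈ ℍ : |Re z| ≤ T · Im z}`. -/
def cone (T : ℝ) : Set UpperHalfPlane := {z | |z.re| ≤ T * z.im}

/-- The rotation matrix `k_θ = (cos θ, sin θ; −sin θ, cos θ)`. -/
noncomputable def kMat (θ : ℝ) : Matrix (Fin 2) (Fin 2) ℝ :=
  !![Real.cos θ, Real.sin θ; -Real.sin θ, Real.cos θ]

/-- The diagonal matrix `diag(y^{1/2}, y^{−1/2})`. -/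
noncomputable def aMat (y : ℝ) : Matrix (Fin 2) (Fin 2) ℝ :=
  !![Real.sqrt y, 0; 0, (Real.sqrt y)⁻¹]

/-- The spherical `δ`-neighborhood of the identity `B_δ = K A_δ K ⊂ SL₂(ℝ)`. -/
def BNbhd (δ : ℝ) : Set (Matrix.SpecialLinearGroup (Fin 2) ℝ) :=
  {g | ∃ θ φ y : ℝ, 0 < y ∧ |Real.log y| < δ ∧
    (g : Matrix (Fin 2) (Fin 2) ℝ) = kMat θ * aMat y * kMat φ}

/-- `F_S(g) = Σ_{γ ∈ Γ} 𝟙[ τ⁻¹γg·i ∈ C_S ]`, valued in `[0,∞]`. -/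
noncomputable def shiftedCount (Γ : Subgroup (Matrix.SpecialLinearGroup (Fin 2) ℝ))
    (τ : Matrix.SpecialLinearGroup (Fin 2) ℝ) (S : ℝ)
    (g : Matrix.SpecialLinearGroup (Fin 2) ℝ) : ℝ≥0∞ :=
  ∑' γ : Γ, (cone S).indicator 1 ((τ⁻¹ * (γ : Matrix.SpecialLinearGroup (Fin 2) ℝ) * g)
    • UpperHalfPlane.I)

open UpperHalfPlane in
/-- Algebraic form of the triangle inequality for the distance to the imaginary axis: with
`re / im = sinh u`, it reads `cosh (u - u') ≤ cosh (dist z w)`, squared and rearranged. -/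
lemma slope_sub_sq_le (z w : UpperHalfPlane) :
    (w.re / w.im - Real.cosh (dist z w) * (z.re / z.im)) ^ 2 ≤
      Real.sinh (dist z w) ^ 2 * (1 + (z.re / z.im) ^ 2) := by
  have hc := cosh_dist' z w
  have hz := z.im_pos
  have hw := w.im_pos
  rw [Real.sinh_sq]
  generalize Real.cosh (dist z w) = c at *
  rw [_root_.eq_div_iff (by positivity)] at hc
  obtain ⟨s, hs⟩ : ∃ s, s = z.re / z.im := ⟨_, rfl⟩
  obtain ⟨t, ht⟩ : ∃ t, t = w.re / w.im := ⟨_, rfl⟩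
  rw [← hs, ← ht]
  have hs' : z.re = s * z.im := by rw [hs]; field_simp
  have ht' : w.re = t * w.im := by rw [ht]; field_simp
  rw [hs', ht'] at hc
  generalize z.im = y at *
  generalize w.im = v at *
  -- By AM-GM, `2 (c + st) y v = (1 + s²) y² + (1 + t²) v² ≥ 2 √(1 + s²) √(1 + t²) y v`.
  have key : (1 + s ^ 2) * (1 + t ^ 2) * (2 * y * v) ^ 2 ≤ (c + s * t) ^ 2 * (2 * y * v) ^ 2 := by
    have e : (c + s * t) * (2 * y * v) = (1 + s ^ 2) * y ^ 2 + (1 + t ^ 2) * v ^ 2 := by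
      linear_combination hc
    rw [← mul_pow, e]
    nlinarith [sq_nonneg ((1 + s ^ 2) * y ^ 2 - (1 + t ^ 2) * v ^ 2)]
  have key' := le_of_mul_le_mul_right key (by positivity)
  nlinarith [key']

lemma cosh_sinh_bound {d : ℝ} (h0 : 0 ≤ d) (h1 : d ≤ 1 / 8) :
    Real.cosh d + 3 / 2 * Real.sinh d ≤ 1 + 4 * d := by
  have a := abs_le.1 (Real.abs_exp_sub_one_sub_id_le (x := d) (abs_le.2 ⟨by linarith, by linarith⟩))
  have b := abs_le.1 (Real.abs_exp_sub_one_sub_id_le (x := -d)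
    (abs_le.2 ⟨by linarith, by linarith⟩))
  rw [Real.cosh_eq, Real.sinh_eq]
  nlinarith [a.1, a.2, b.1, b.2]

lemma mem_cone_iff (S : ℝ) (z : UpperHalfPlane) : z ∈ cone S ↔ |z.re / z.im| ≤ S := by
  rw [abs_div, abs_of_pos z.im_pos, div_le_iff₀ z.im_pos]
  rfl

lemma mem_cone_of_dist_le {S δ : ℝ} (hS : 1 ≤ S) (hδ : δ ≤ 1 / 8) {z w : UpperHalfPlane}
    (hd : dist z w ≤ δ) (hz : z ∈ cone S) : w ∈ cone (S * (1 + 4 * δ)) := by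
  rw [mem_cone_iff] at hz ⊢
  have h := slope_sub_sq_le z w
  have hb := cosh_sinh_bound dist_nonneg (hd.trans hδ)
  have hsh : 0 ≤ Real.sinh (dist z w) := Real.sinh_nonneg_iff.2 dist_nonneg
  have hch := Real.cosh_pos (dist z w)
  generalize Real.cosh (dist z w) = c at *
  generalize Real.sinh (dist z w) = s at *
  generalize z.re / z.im = x at *
  generalize w.re / w.im = x' at *
  -- `1 + x² ≤ 2 S² ≤ (3/2 S)²` because `S ≥ 1`.
  have hx : 1 + x ^ 2 ≤ (3 / 2 * S) ^ 2 := by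
    have := sq_le_sq' (abs_le.1 hz).1 (abs_le.1 hz).2
    nlinarith
  have h1 : |x' - c * x| ≤ s * (3 / 2 * S) := by
    apply abs_le_of_sq_le_sq _ (by positivity)
    rw [mul_pow]
    exact h.trans (mul_le_mul_of_nonneg_left hx (sq_nonneg s))
  calc |x'| = |(x' - c * x) + c * x| := by ring_nf
    _ ≤ |x' - c * x| + |c * x| := abs_add_le _ _
    _ ≤ s * (3 / 2 * S) + c * S := by
      rw [abs_mul, abs_of_pos hch]
      gcongr
    _ = S * (c + 3 / 2 * s) := by ring
    _ ≤ S * (1 + 4 * δ) := mul_le_mul_of_nonneg_left (by linarith) (by linarith)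

open UpperHalfPlane in
lemma cosh_dist_smul_I (g : Matrix.SpecialLinearGroup (Fin 2) ℝ) :
    Real.cosh (dist (g • I) I) = (g 0 0 ^ 2 + g 0 1 ^ 2 + g 1 0 ^ 2 + g 1 1 ^ 2) / 2 := by
  have hdet : g 0 0 * g 1 1 - g 0 1 * g 1 0 = 1 := by
    have := g.det_coe
    rwa [Matrix.det_fin_two] at this
  have hpos : 0 < g 1 0 ^ 2 + g 1 1 ^ 2 := by
    rcases eq_or_ne (g 1 0) 0 with h | h
    · have : g 1 1 ≠ 0 := by
        intro h'
        simp [h, h'] at hdet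
      positivity
    · positivity
  have hcoe : ((g • I : UpperHalfPlane) : ℂ) = ⟨(g 0 0 * g 1 0 + g 0 1 * g 1 1) /
      (g 1 0 ^ 2 + g 1 1 ^ 2), 1 / (g 1 0 ^ 2 + g 1 1 ^ 2)⟩ := by
    have hden : ((g 1 0 : ℂ) * Complex.I + g 1 1) ≠ 0 := by
      intro h
      have h1 := congrArg Complex.re h
      have h2 := congrArg Complex.im h
      simp at h1 h2
      simp [h1, h2] at hpos
    rw [coe_specialLinearGroup_apply]
    simp only [Algebra.algebraMap_self, RingHom.id_apply, coe_I]
    rw [div_eq_iff hden]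
    apply Complex.ext
    · simp
      field_simp
      linear_combination (-g 1 0) * hdet
    · simp
      field_simp
      linear_combination (g 1 1) * hdet
  have hre : (g • I : UpperHalfPlane).re = (g 0 0 * g 1 0 + g 0 1 * g 1 1) /
      (g 1 0 ^ 2 + g 1 1 ^ 2) := congrArg Complex.re hcoe
  have him : (g • I : UpperHalfPlane).im = 1 / (g 1 0 ^ 2 + g 1 1 ^ 2) :=
    congrArg Complex.im hcoe
  rw [cosh_dist', hre, him, I_re, I_im]
  field_simp
  generalize g 0 0 = a at *
  generalize g 0 1 = b at *
  generalize g 1 0 = c at *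
  generalize g 1 1 = d at *
  linear_combination (-(a * d - b * c) - 1) * hdet

lemma dist_smul_I_le {δ : ℝ} {g : Matrix.SpecialLinearGroup (Fin 2) ℝ} (hg : g ∈ BNbhd δ) :
    dist (g • UpperHalfPlane.I) UpperHalfPlane.I ≤ δ := by
  obtain ⟨θ, φ, y, hy, hlog, hgm⟩ := hg
  have hs : Real.sqrt y ^ 2 = y := Real.sq_sqrt hy.le
  have h := cosh_dist_smul_I g
  have hE : g 0 0 ^ 2 + g 0 1 ^ 2 + g 1 0 ^ 2 + g 1 1 ^ 2 = y + y⁻¹ := by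
    have hi : (Real.sqrt y)⁻¹ ^ 2 = y⁻¹ := by rw [inv_pow, hs]
    rw [hgm]
    simp only [kMat, aMat, Matrix.mul_apply, Fin.sum_univ_two, 
      Matrix.of_apply, Matrix.cons_val', Matrix.cons_val_zero, Matrix.cons_val_one, Matrix.cons_val_fin_one]
    rw [← hi]
    nth_rewrite 9 [← hs]
    generalize (Real.sqrt y)⁻¹ = q
    generalize Real.sqrt y = p
    have h1 := Real.sin_sq_add_cos_sq θ
    have h2 := Real.sin_sq_add_cos_sq φ
    generalize Real.sin θ = a at *
    generalize Real.cos θ = b at *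
    generalize Real.sin φ = c at *
    generalize Real.cos φ = d at *
    linear_combination (p ^ 2 + q ^ 2) * (c ^ 2 + d ^ 2) * h1 + (p ^ 2 + q ^ 2) * h2
  rw [hE, ← Real.cosh_log hy] at h
  have h' := Real.cosh_le_cosh.1 h.le
  rw [abs_of_nonneg dist_nonneg] at h'
  exact h'.trans hlog.le

lemma encard_eq_tsum (Γ : Subgroup (Matrix.SpecialLinearGroup (Fin 2) ℝ))
    (τ : Matrix.SpecialLinearGroup (Fin 2) ℝ) (T : ℝ) :
    (({γ : Γ | (τ⁻¹ * (γ : Matrix.SpecialLinearGroup (Fin 2) ℝ))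
        • UpperHalfPlane.I ∈ cone T}).encard : ℝ≥0∞) =
      ∑' γ : Γ, (cone T).indicator 1
        ((τ⁻¹ * (γ : Matrix.SpecialLinearGroup (Fin 2) ℝ)) • UpperHalfPlane.I) := by
  rw [← ENNReal.tsum_set_one, tsum_subtype _ (fun _ => (1 : ℝ≥0∞))]
  rfl

lemma indicator_cone_le {S S' : ℝ} {z w : UpperHalfPlane} (h : z ∈ cone S → w ∈ cone S') :
    (cone S).indicator (1 : UpperHalfPlane → ℝ≥0∞) z ≤ (cone S').indicator 1 w := by
  by_cases hz : z ∈ cone S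
  · simp [hz, h hz]
  · simp [hz]

/-- The smoothed counting sandwich: for `ψ ≥ 0` supported in `B_δ` with `∫ ψ dμ = 1`,
`∫ F_{T(1−4δ)} ψ dμ ≤ #{γ ∈ Γ : τ⁻¹γ·i ∈ C_T} ≤ ∫ F_{T(1+4δ)} ψ dμ`. -/
theorem counting_sandwich (Γ : Subgroup (Matrix.SpecialLinearGroup (Fin 2) ℝ)) [Countable Γ]
    (μ : Measure (Matrix.SpecialLinearGroup (Fin 2) ℝ)) [μ.IsMulLeftInvariant]
    (τ : Matrix.SpecialLinearGroup (Fin 2) ℝ) (δ T : ℝ)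
    (hδ0 : 0 < δ) (hδ : δ ≤ 1 / 8) (hT : 1 ≤ T * (1 - 4 * δ))
    (ψ : Matrix.SpecialLinearGroup (Fin 2) ℝ → ℝ) (hψm : Measurable ψ)
    (hψ0 : ∀ g, 0 ≤ ψ g) (hψsupp : ∀ g, ψ g ≠ 0 → g ∈ BNbhd δ)
    (hψint : ∫ g, ψ g ∂μ = 1) :
    (∫⁻ g, shiftedCount Γ τ (T * (1 - 4 * δ)) g * ENNReal.ofReal (ψ g) ∂μ) ≤
        (({γ : Γ | (τ⁻¹ * (γ : Matrix.SpecialLinearGroup (Fin 2) ℝ))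
            • UpperHalfPlane.I ∈ cone T}).encard : ℝ≥0∞) ∧
      (({γ : Γ | (τ⁻¹ * (γ : Matrix.SpecialLinearGroup (Fin 2) ℝ))
            • UpperHalfPlane.I ∈ cone T}).encard : ℝ≥0∞) ≤
        ∫⁻ g, shiftedCount Γ τ (T * (1 + 4 * δ)) g * ENNReal.ofReal (ψ g) ∂μ := by
  have hTpos : 0 < T := by
    by_contra! h
    nlinarith
  have hT1 : 1 ≤ T := by nlinarith
  have hmass : ∫⁻ g, ENNReal.ofReal (ψ g) ∂μ = 1 := by
    -- A nonzero Bochner integral certifies integrability.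
    have hInt : Integrable ψ μ := by
      by_contra h
      rw [integral_undef h] at hψint
      exact zero_ne_one hψint
    rw [← ofReal_integral_eq_lintegral_ofReal hInt (ae_of_all _ hψ0), hψint, ENNReal.ofReal_one]
  have hdist : ∀ g ∈ BNbhd δ, ∀ h : Matrix.SpecialLinearGroup (Fin 2) ℝ,
      dist ((h * g) • UpperHalfPlane.I) (h • UpperHalfPlane.I) ≤ δ := by
    intro g hg h
    rw [mul_smul, dist_smul]
    exact dist_smul_I_le hg
  rw [encard_eq_tsum]
  set N : ℝ≥0∞ := ∑' γ : Γ, (cone T).indicator 1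
        ((τ⁻¹ * (γ : Matrix.SpecialLinearGroup (Fin 2) ℝ)) • UpperHalfPlane.I) with hN
  have hNint : ∫⁻ g, N * ENNReal.ofReal (ψ g) ∂μ = N := by
    rw [lintegral_const_mul _ hψm.ennreal_ofReal, hmass, mul_one]
  constructor
  · refine le_trans (lintegral_mono fun g => ?_) hNint.le
    by_cases hg : ψ g = 0
    · simp [hg]
    · refine mul_le_mul_left (ENNReal.tsum_le_tsum fun γ => indicator_cone_le fun hz => ?_) _
      have := mem_cone_of_dist_le hT hδ (hdist g (hψsupp g hg) _) hz
      rw [mem_cone_iff] at this ⊢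
      refine this.trans ?_
      -- `(1 - 4δ)(1 + 4δ) = 1 - 16δ² ≤ 1`.
      nlinarith [mul_nonneg hTpos.le (sq_nonneg δ)]
  · refine le_trans hNint.ge (lintegral_mono fun g => ?_)
    by_cases hg : ψ g = 0
    · simp [hg]
    · refine mul_le_mul_left (ENNReal.tsum_le_tsum fun γ => indicator_cone_le fun hz => ?_) _
      refine mem_cone_of_dist_le hT1 hδ ?_ hz
      rw [dist_comm]
      exact hdist g (hψsupp g hg) _
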